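/- Commutator identity: let d ≥ 2, γ ∈ (0,1), let D ⊂ ℝ^d be a bounded C^{1+γ} domain with defining function Φ, and set v(x) = -∫_D ∇N(x-y) dy. Then for every x ∉ ∂D (where v is differentiable), the absolutely convergent integral ∫_D ∇²N(x-y)(∇Φ(x) - ∇Φ(y)) dy equals -∇v(x)(∇Φ(x)) - χ_D(x) ∇Φ(x), where ∇²N(z) is the matrix with entries (1/ω_{d-1})(δ_{ij}/|z|^d - d z_i z_j/|z|^{d+2}) for z ≠ 0 and ∇v(x) is the derivative matrix of v at x. -/

import Mathlib

open MeasureTheory Metric Set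
open scoped RealInnerProductSpace

noncomputable def sphereVol (d : ℕ) : ℝ :=
  d * (volume (Metric.ball (0 : EuclideanSpace ℝ (Fin d)) 1)).toReal

noncomputable def gradN (d : ℕ) (y : EuclideanSpace ℝ (Fin d)) : EuclideanSpace ℝ (Fin d) :=
  (sphereVol d * ‖y‖ ^ d)⁻¹ • y

noncomputable def hessN (d : ℕ) (z w : EuclideanSpace ℝ (Fin d)) : EuclideanSpace ℝ (Fin d) :=
  (sphereVol d)⁻¹ • ((‖z‖ ^ d)⁻¹ • w - ((d : ℝ) * (‖z‖ ^ (d + 2))⁻¹ * ⟪z, w⟫) • z)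

/-- `Φ` is a defining function of class `C^{1+γ}` for the set `D`. -/
def IsDefining (d : ℕ) (γ : ℝ) (D : Set (EuclideanSpace ℝ (Fin d)))
    (Φ : EuclideanSpace ℝ (Fin d) → ℝ) : Prop :=
  ContDiff ℝ 1 Φ ∧
  (∃ K : ℝ, ∀ x y, ‖gradient Φ x - gradient Φ y‖ ≤ K * ‖x - y‖ ^ γ) ∧
  D = {x | Φ x < 0} ∧
  frontier D = {x | Φ x = 0} ∧
  ∀ x ∈ frontier D, gradient Φ x ≠ 0

/-- `D` is a bounded domain of class `C^{1+γ}`. -/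
def IsC1Domain (d : ℕ) (γ : ℝ) (D : Set (EuclideanSpace ℝ (Fin d))) : Prop :=
  IsOpen D ∧ Bornology.IsBounded D ∧ ∃ Φ, IsDefining d γ D Φ

abbrev EE (d : ℕ) := EuclideanSpace ℝ (Fin d)

/-- The Hessian as a continuous linear map. -/
noncomputable def hessL (d : ℕ) (z : EuclideanSpace ℝ (Fin d)) :
    EuclideanSpace ℝ (Fin d) →L[ℝ] EuclideanSpace ℝ (Fin d) :=
  (sphereVol d)⁻¹ • ((‖z‖ ^ d)⁻¹ • ContinuousLinearMap.id ℝ _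
    - ((d : ℝ) * (‖z‖ ^ (d + 2))⁻¹) • (innerSL ℝ z).smulRight z)

lemma hessL_apply (d : ℕ) (z w : EE d) : hessL d z w = hessN d z w := by
  simp [hessL, hessN, smul_smul]

lemma sphereVol_pos (d : ℕ) (hd : 2 ≤ d) : 0 < sphereVol d := by
  unfold sphereVol
  have : (0:ℝ) < d := by positivity
  apply mul_pos this
  exact ENNReal.toReal_pos (measure_ball_pos _ _ one_pos).ne' measure_ball_lt_top.ne

lemma hasFDerivAt_norm_pow_inv (d n : ℕ) (z : EE d) (hz : z ≠ 0) :
    HasFDerivAt (fun y : EE d => (‖y‖ ^ n)⁻¹)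
      ((-(n : ℝ) * (‖z‖ ^ (n + 2))⁻¹) • innerSL ℝ z) z := by
  have hz' : ‖z‖ ≠ 0 := norm_ne_zero_iff.2 hz
  have h1 : HasFDerivAt (fun y : EE d => ‖y‖ ^ 2) (2 • innerSL ℝ z) z :=
    (hasStrictFDerivAt_norm_sq z).hasFDerivAt
  have h2 : HasFDerivAt (fun y : EE d => ‖y‖) (‖z‖⁻¹ • innerSL ℝ z) z := by
    have := h1.sqrt (by positivity)
    simp only [Real.sqrt_sq (norm_nonneg _)] at this
    refine this.congr_fderiv ?_
    ext w
    simp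
    field_simp
  have h3 := h2.pow n
  have h4 := (hasDerivAt_inv (pow_ne_zero n hz')).comp_hasFDerivAt z h3
  refine h4.congr_fderiv ?_
  ext w
  rcases n with _ | n
  · simp
  · simp
    field_simp
    ring

lemma norm_hessN_le (d : ℕ) (hd : 2 ≤ d) (z w : EE d) :
    ‖hessN d z w‖ ≤ ((sphereVol d)⁻¹ * (1 + d)) * (‖z‖ ^ d)⁻¹ * ‖w‖ := by
  have hω := sphereVol_pos d hd
  rcases eq_or_ne z 0 with rfl | hz
  · simp [hessN, show d ≠ 0 by omega]
  have hz' : 0 < ‖z‖ := norm_pos_iff.2 hz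
  unfold hessN
  rw [norm_smul, Real.norm_of_nonneg (by positivity),
    show (sphereVol d)⁻¹ * (1 + (d:ℝ)) * (‖z‖ ^ d)⁻¹ * ‖w‖
      = (sphereVol d)⁻¹ * ((1 + (d:ℝ)) * ((‖z‖ ^ d)⁻¹ * ‖w‖)) by ring]
  refine mul_le_mul_of_nonneg_left ?_ (by positivity)
  refine (norm_sub_le _ _).trans ?_
  rw [norm_smul, norm_smul, norm_mul, norm_mul, norm_inv, norm_inv, norm_pow, norm_pow, norm_norm,
    Real.norm_natCast, add_mul, one_mul]
  refine add_le_add le_rfl ?_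
  calc (d:ℝ) * (‖z‖ ^ (d + 2))⁻¹ * ‖(⟪z, w⟫ : ℝ)‖ * ‖z‖
      ≤ (d:ℝ) * (‖z‖ ^ (d + 2))⁻¹ * (‖z‖ * ‖w‖) * ‖z‖ := by
        gcongr; exact norm_inner_le_norm z w
    _ = (d:ℝ) * ((‖z‖ ^ d)⁻¹ * ‖w‖) := by field_simp; ring

lemma norm_hessL_le (d : ℕ) (hd : 2 ≤ d) (z : EE d) :
    ‖hessL d z‖ ≤ ((sphereVol d)⁻¹ * (1 + d)) * (‖z‖ ^ d)⁻¹ := by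
  have hω := sphereVol_pos d hd
  refine ContinuousLinearMap.opNorm_le_bound _ (by positivity) fun w => ?_
  rw [hessL_apply]
  exact norm_hessN_le d hd z w

lemma hasFDerivAt_gradN (d : ℕ) (z : EE d) (hz : z ≠ 0) :
    HasFDerivAt (gradN d) (hessL d z) z := by
  have h := ((hasFDerivAt_norm_pow_inv d d z hz).const_mul (sphereVol d)⁻¹).smul
    (hasFDerivAt_id z)
  have e : gradN d = fun y : EE d => ((sphereVol d)⁻¹ * (‖y‖ ^ d)⁻¹) • y := by
    ext1 y; simp [gradN, mul_inv]; rw [mul_comm]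
  rw [e]
  refine h.congr_fderiv ?_
  ext1 w
  rw [hessL_apply]
  simp only [hessN, id, _root_.add_apply, _root_.smul_apply,
    ContinuousLinearMap.smulRight_apply, innerSL_apply_apply, ContinuousLinearMap.id_apply,
    smul_eq_mul]
  module

lemma hasFDerivAt_hessN (d : ℕ) (z e : EE d) (hz : z ≠ 0) :
    HasFDerivAt (fun y => hessN d y e)
      ((sphereVol d)⁻¹ • (((-(d : ℝ) * (‖z‖ ^ (d + 2))⁻¹) • innerSL ℝ z).smulRight e
        - (((d : ℝ) * (‖z‖ ^ (d + 2))⁻¹ * ⟪z, e⟫) • ContinuousLinearMap.id ℝ _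
          + ((d : ℝ) • ((‖z‖ ^ (d + 2))⁻¹ • innerSL ℝ e
            + (⟪z, e⟫ * (-((d + 2 : ℕ) : ℝ) * (‖z‖ ^ (d + 2 + 2))⁻¹)) • innerSL ℝ z)).smulRight z)))
      z := by
  have h1 := (hasFDerivAt_norm_pow_inv d d z hz).smul_const e
  have h2 := ((hasFDerivAt_norm_pow_inv d (d+2) z hz).const_mul (d : ℝ))
  have h3 : HasFDerivAt (fun y : EE d => (⟪y, e⟫ : ℝ)) (innerSL ℝ e) z := by
    have := (innerSL ℝ e).hasFDerivAt (x := z)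
    refine this.congr_of_eventuallyEq (Filter.Eventually.of_forall fun y => ?_)
    simp [real_inner_comm]
  have h4 := ((h1.sub ((h2.mul h3).smul (hasFDerivAt_id z))).const_smul (sphereVol d)⁻¹)
  refine h4.congr_fderiv ?_
  ext1 w
  simp only [id, _root_.add_apply, _root_.sub_apply,
    _root_.smul_apply,
    ContinuousLinearMap.smulRight_apply, innerSL_apply_apply, ContinuousLinearMap.id_apply,
    smul_eq_mul, Pi.mul_apply]
  module

/-- line derivative of `y ↦ hessN (x-y) e` in the direction `e`, up to sign -/
noncomputable def dH (d : ℕ) (z e : EE d) : EE d :=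
  (sphereVol d)⁻¹ • ((-(2 * d : ℝ) * (‖z‖ ^ (d + 2))⁻¹ * ⟪z, e⟫) • e
    + ((d : ℝ) * ((d + 2) * (‖z‖ ^ (d + 4))⁻¹ * ⟪z, e⟫ ^ 2 - (‖z‖ ^ (d + 2))⁻¹ * ‖e‖ ^ 2)) • z)

lemma hasLineDerivAt_hessN (d : ℕ) (x y e : EE d) (hz : x - y ≠ 0) :
    HasLineDerivAt ℝ (fun y => hessN d (x - y) e) (-(dH d (x - y) e)) y e := by
  have h := (hasFDerivAt_hessN d (x - y) e hz).comp y ((hasFDerivAt_id y).const_sub x)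
  have h' := h.hasLineDerivAt e
  refine Eq.mp (congrArg (fun q => HasLineDerivAt ℝ (fun y => hessN d (x - y) e) q y e) ?_) h'
  simp only [dH, id, ContinuousLinearMap.comp_apply, _root_.neg_apply, map_neg,
    _root_.add_apply, _root_.sub_apply,
    _root_.smul_apply,
    ContinuousLinearMap.smulRight_apply, innerSL_apply_apply, ContinuousLinearMap.id_apply,
    smul_eq_mul, real_inner_self_eq_norm_sq]
  push_cast
  rw [show d + 2 + 2 = d + 4 from rfl]
  module

lemma sum_dH (d : ℕ) (z : EE d) (hz : z ≠ 0) :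
    ∑ j, dH d z (EuclideanSpace.basisFun (Fin d) ℝ j) = 0 := by
  set b := EuclideanSpace.basisFun (Fin d) ℝ
  have hz' : ‖z‖ ≠ 0 := norm_ne_zero_iff.2 hz
  have h1 : ∑ j, (⟪z, b j⟫ : ℝ) • b j = z := by
    simpa [real_inner_comm] using b.sum_repr' z
  have h2 : ∑ j, (⟪z, b j⟫ : ℝ) ^ 2 = ‖z‖ ^ 2 := b.sum_sq_inner_left z
  have e : ∀ j, dH d z (b j) = (sphereVol d)⁻¹ • ((-(2 * d : ℝ) * (‖z‖ ^ (d + 2))⁻¹) • ((⟪z, b j⟫ : ℝ) • b j)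
    + ((d : ℝ) * ((d + 2) * (‖z‖ ^ (d + 4))⁻¹ * ⟪z, b j⟫ ^ 2 - (‖z‖ ^ (d + 2))⁻¹)) • z) := by
    intro j
    simp [dH, smul_smul]
  simp_rw [e]
  rw [← Finset.smul_sum, Finset.sum_add_distrib, ← Finset.smul_sum, h1, ← Finset.sum_smul,
    ← Finset.mul_sum, Finset.sum_sub_distrib, ← Finset.mul_sum, h2, ← add_smul]
  simp
  right; left
  field_simp
  ring


lemma integrable_of_contOn_compact (d : ℕ) {F : Type*} [NormedAddCommGroup F] {f : EE d → F}
    {K : Set (EE d)}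
    (hK : IsCompact K) (hf : ContinuousOn f K) (h0 : ∀ y ∉ K, f y = 0) : Integrable f := by
  have := hf.integrableOn_compact (μ := volume) hK
  refine (integrableOn_iff_integrable_of_support_subset ?_).1 this
  intro y hy
  by_contra h
  exact hy (h0 y h)

lemma continuous_gradient (d : ℕ) {k : EE d → ℝ} (hk : ContDiff ℝ 1 k) :
    Continuous (gradient k) := by
  unfold gradient
  exact (InnerProductSpace.toDual ℝ (EE d)).symm.continuous.comp (hk.continuous_fderiv one_ne_zero)

lemma inner_gradient (d : ℕ) (k : EE d → ℝ) (y v : EE d) :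
    ⟪gradient k y, v⟫ = fderiv ℝ k y v := by
  simp [gradient]

lemma continuousOn_hessN (d : ℕ) (x : EE d) {K : Set (EE d)} (hx : x ∉ K) {g : EE d → EE d}
    (hg : ContinuousOn g K) : ContinuousOn (fun y => hessN d (x - y) (g y)) K := by
  unfold hessN
  have hne : ∀ n : ℕ, ∀ y ∈ K, ‖x - y‖ ^ n ≠ 0 := by
    intro n y hy
    refine pow_ne_zero _ (norm_ne_zero_iff.2 (sub_ne_zero.2 ?_))
    rintro rfl; exact hx hy
  have h1 : ∀ n : ℕ, ContinuousOn (fun y => (‖x - y‖ ^ n)⁻¹) K := fun n =>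
    ContinuousOn.inv₀ (by fun_prop) (hne n)
  have h2 := h1 d
  have h3 := h1 (d+2)
  fun_prop

lemma continuousOn_dH (d : ℕ) (x e : EE d) {K : Set (EE d)} (hx : x ∉ K) :
    ContinuousOn (fun y => dH d (x - y) e) K := by
  unfold dH
  have hne : ∀ n : ℕ, ∀ y ∈ K, ‖x - y‖ ^ n ≠ 0 := by
    intro n y hy
    refine pow_ne_zero _ (norm_ne_zero_iff.2 (sub_ne_zero.2 ?_))
    rintro rfl; exact hx hy
  have h1 : ∀ n : ℕ, ContinuousOn (fun y => (‖x - y‖ ^ n)⁻¹) K := fun n =>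
    ContinuousOn.inv₀ (by fun_prop) (hne n)
  have h2 := h1 (d+2)
  have h3 := h1 (d+4)
  fun_prop

lemma integral_hess_gradient (d : ℕ) {k : EE d → ℝ} (hk : ContDiff ℝ 1 k)
    (hc : HasCompactSupport k) (x : EE d) (ρ : ℝ) (hρ : 0 < ρ) (h0 : ∀ y ∈ ball x ρ, k y = 0) :
    ∫ y, hessN d (x - y) (gradient k y) = 0 := by
  set b := EuclideanSpace.basisFun (Fin d) ℝ with hb
  set K := tsupport k with hKdef
  have hK : IsCompact K := hc
  have hxK : x ∉ K := by
    rw [hKdef, notMem_tsupport_iff_eventuallyEq]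
    filter_upwards [ball_mem_nhds x hρ] with y hy using h0 y hy
  have hne : ∀ y ∈ K, x - y ≠ 0 := by
    intro y hy h
    rw [sub_eq_zero] at h
    subst h; exact hxK hy
  have hk0 : ∀ y ∉ K, k y = 0 := fun y hy => image_eq_zero_of_notMem_tsupport hy
  have hk0' : ∀ y ∉ K, fderiv ℝ k y = 0 := fun y hy => by
    by_contra h
    exact hy (support_fderiv_subset ℝ h)
  have hd' : Continuous (fderiv ℝ k) := hk.continuous_fderiv one_ne_zero
  have hdk : Differentiable ℝ k := hk.differentiable one_ne_zero
  have i1 : ∀ j, Integrable (fun y => (fderiv ℝ k y (b j)) • hessN d (x - y) (b j)) := by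
    intro j
    refine integrable_of_contOn_compact d hK ?_ ?_
    · have := continuousOn_hessN d x hxK (g := fun _ => b j) continuousOn_const
      have h2 : ContinuousOn (fun y => fderiv ℝ k y (b j)) K := by fun_prop
      exact h2.smul this
    · intro y hy; simp [hk0' y hy]
  have i2 : ∀ j, Integrable (fun y => k y • -(dH d (x - y) (b j))) := by
    intro j
    refine integrable_of_contOn_compact d hK ?_ ?_
    · have := continuousOn_dH d x (b j) hxK
      exact (hk.continuous.continuousOn).smul this.neg
    · intro y hy; simp [hk0 y hy]
  have i3 : ∀ j, Integrable (fun y => k y • hessN d (x - y) (b j)) := by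
    intro j
    refine integrable_of_contOn_compact d hK ?_ ?_
    · have := continuousOn_hessN d x hxK (g := fun _ => b j) continuousOn_const
      exact (hk.continuous.continuousOn).smul this
    · intro y hy; simp [hk0 y hy]
  have ibp : ∀ j, ∫ y, k y • -(dH d (x - y) (b j))
      = - ∫ y, (fderiv ℝ k y (b j)) • hessN d (x - y) (b j) := by
    intro j
    have := integral_bilinear_hasLineDerivAt_right_eq_neg_left_of_integrable (μ := volume)
      (f := k) (f' := fun y => fderiv ℝ k y (b j)) (g := fun y => hessN d (x - y) (b j))
      (g' := fun y => -(dH d (x - y) (b j))) (v := b j)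
      (B := ContinuousLinearMap.lsmul ℝ ℝ) (by simpa using i1 j) (by simpa using i2 j)
      (by simpa using i3 j)
      (fun y _ => (hdk y).hasFDerivAt.hasLineDerivAt _)
      (fun y hy => hasLineDerivAt_hessN d x y (b j) (hne y hy))
    simpa using this
  have hsum : ∀ y, hessN d (x - y) (gradient k y)
      = ∑ j, (fderiv ℝ k y (b j)) • hessN d (x - y) (b j) := by
    intro y
    have e := b.sum_repr' (gradient k y)
    rw [← hessL_apply]
    conv_lhs => rw [← e]
    rw [map_sum]
    refine Finset.sum_congr rfl fun j _ => ?_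
    rw [map_smul, hessL_apply, real_inner_comm, inner_gradient]
  simp_rw [hsum]
  rw [integral_finsetSum _ (fun j _ => i1 j)]
  have h4 : ∀ j, ∫ y, (fderiv ℝ k y (b j)) • hessN d (x - y) (b j)
      = - ∫ y, k y • -(dH d (x - y) (b j)) := by
    intro j; rw [ibp, neg_neg]
  simp_rw [h4]
  rw [Finset.sum_neg_distrib, ← integral_finsetSum _ (fun j _ => i2 j)]
  rw [neg_eq_zero]
  have h5 : ∀ y, ∑ j, k y • -(dH d (x - y) (b j)) = 0 := by
    intro y
    by_cases hy : y ∈ K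
    · rw [← Finset.smul_sum, Finset.sum_neg_distrib, sum_dH d _ (hne y hy)]; simp
    · simp [hk0 y hy]
  simp only [h5, integral_zero]


lemma intOn_hess (d : ℕ) {D : Set (EE d)} (hDm : MeasurableSet D) (hDb : Bornology.IsBounded D)
    (x : EE d) (ρ : ℝ) (hρ : 0 < ρ)
    {q : EE d → ℝ} (hq : Continuous q) {g : EE d → EE d} (hg : Continuous g)
    (h0 : ∀ y ∈ ball x ρ, y ∈ D → q y • hessN d (x - y) (g y) = 0) :
    IntegrableOn (fun y => q y • hessN d (x - y) (g y)) D := by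
  have h1 : IntegrableOn (fun y => q y • hessN d (x - y) (g y)) (closure D \ ball x ρ) := by
    refine ContinuousOn.integrableOn_compact ?_ ?_
    · exact hDb.isCompact_closure.diff isOpen_ball
    · refine hq.continuousOn.smul (continuousOn_hessN d x ?_ hg.continuousOn)
      intro h
      exact h.2 (mem_ball_self hρ)
  have h2 : IntegrableOn (fun y => q y • hessN d (x - y) (g y)) (D ∩ ball x ρ) := by
    have : EqOn (fun y => q y • hessN d (x - y) (g y)) 0 (D ∩ ball x ρ) :=
      fun y hy => h0 y hy.2 hy.1
    rw [integrableOn_congr_fun this (hDm.inter measurableSet_ball)]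
    exact integrableOn_zero
  refine (h1.union h2).mono_set ?_
  intro y hy
  by_cases h : y ∈ ball x ρ
  · exact Or.inr ⟨hy, h⟩
  · exact Or.inl ⟨subset_closure hy, h⟩

lemma differentiable_sT : Differentiable ℝ Real.smoothTransition :=
  (Real.smoothTransition.contDiff (n := 1)).differentiable (by simp)

lemma continuous_deriv_sT : Continuous (deriv Real.smoothTransition) :=
  (Real.smoothTransition.contDiff (n := 1)).continuous_deriv (by simp)

lemma deriv_sT_of_nonpos {u : ℝ} (hu : u ≤ 0) : deriv Real.smoothTransition u = 0 := by
  apply IsLocalMin.deriv_eq_zero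
  refine Filter.Eventually.of_forall fun v => ?_
  rw [Real.smoothTransition.zero_of_nonpos hu]
  exact Real.smoothTransition.nonneg v

lemma deriv_sT_of_one_le {u : ℝ} (hu : 1 ≤ u) : deriv Real.smoothTransition u = 0 := by
  apply IsLocalMax.deriv_eq_zero
  refine Filter.Eventually.of_forall fun v => ?_
  rw [Real.smoothTransition.one_of_one_le hu]
  exact Real.smoothTransition.le_one v

lemma deriv_sT_nonneg (u : ℝ) : 0 ≤ deriv Real.smoothTransition u :=
  Real.smoothTransition.monotone.deriv_nonneg

lemma exists_bound_sT : ∃ M : ℝ, 0 ≤ M ∧ ∀ u, |u * deriv Real.smoothTransition u| ≤ M := by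
  obtain ⟨C, hC⟩ := (isCompact_Icc (a := (0:ℝ)) (b := 1)).exists_bound_of_continuousOn
    (f := fun u => u * deriv Real.smoothTransition u)
    (continuous_id.mul continuous_deriv_sT).continuousOn
  have hC0 : 0 ≤ C := (norm_nonneg _).trans (hC 0 (by simp))
  refine ⟨C, hC0, fun u => ?_⟩
  by_cases h0 : u ≤ 0
  · simpa [deriv_sT_of_nonpos h0] using hC0
  by_cases h1 : 1 ≤ u
  · simpa [deriv_sT_of_one_le h1] using hC0
  · exact hC u ⟨by linarith, by linarith⟩

lemma cut_identity (d : ℕ) {D : Set (EE d)} {Φ η : EE d → ℝ} (hDm : MeasurableSet D)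
    (hDb : Bornology.IsBounded D) (hΦ : ContDiff ℝ 1 Φ) (hD : D = {x | Φ x < 0})
    (hη : ContDiff ℝ 1 η) (x : EE d) (ρ : ℝ) (hρ : 0 < ρ)
    (h1 : ∀ y ∈ ball x ρ, y ∈ D → η y = 1) :
    IntegrableOn (fun y => (1 - η y) • hessN d (x - y) (gradient Φ y)) D ∧
    IntegrableOn (fun y => Φ y • hessN d (x - y) (gradient η y)) D ∧
    ∫ y in D, (1 - η y) • hessN d (x - y) (gradient Φ y)
      = ∫ y in D, Φ y • hessN d (x - y) (gradient η y) := by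
  have hDo : IsOpen D := by
    rw [hD]; exact isOpen_lt hΦ.continuous continuous_const
  have ia : IntegrableOn (fun y => (1 - η y) • hessN d (x - y) (gradient Φ y)) D := by
    refine intOn_hess d hDm hDb x ρ hρ (by have := hη.continuous; fun_prop)
      (continuous_gradient d hΦ) ?_
    intro y hy hyD
    simp [h1 y hy hyD]
  have ib : IntegrableOn (fun y => Φ y • hessN d (x - y) (gradient η y)) D := by
    refine intOn_hess d hDm hDb x ρ hρ hΦ.continuous (continuous_gradient d hη) ?_
    intro y hy hyD
    have : gradient η y = 0 := by
      have h : η =ᶠ[nhds y] fun _ => 1 := by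
        filter_upwards [isOpen_ball.mem_nhds hy, hDo.mem_nhds hyD] with z hz hz' using h1 z hz hz'
      simp [gradient, h.fderiv_eq]
    rw [this, ← hessL_apply]; simp
  refine ⟨ia, ib, ?_⟩
  obtain ⟨M, hM0, hM⟩ := exists_bound_sT
  set T := Real.smoothTransition with hT
  let c : ℕ → ℝ := fun n => n + 1
  have hcpos : ∀ n, 0 < c n := fun n => by positivity
  let k : ℕ → EE d → ℝ := fun n y => (1 - η y) * (Φ y * T (-(Φ y * c n)))
  let P : ℕ → ℝ → ℝ := fun n t => T (-(t * c n)) + (-(t * c n)) * deriv T (-(t * c n))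
  have hk : ∀ n, ContDiff ℝ 1 (k n) := by
    intro n
    have hTc : ContDiff ℝ 1 T := Real.smoothTransition.contDiff (n := 1)
    have : ContDiff ℝ 1 (fun y => T (-(Φ y * c n))) :=
      hTc.comp ((hΦ.mul contDiff_const).neg)
    exact (contDiff_const.sub hη).mul (hΦ.mul this)
  have hgrad : ∀ n y, gradient (k n) y = ((1 - η y) * P n (Φ y)) • gradient Φ y
      - (Φ y * T (-(Φ y * c n))) • gradient η y := by
    intro n y
    have e1 := (hη.differentiable one_ne_zero y).hasFDerivAt
    have e2 := (hΦ.differentiable one_ne_zero y).hasFDerivAt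
    have e3 : HasFDerivAt (fun y => T (-(Φ y * c n))) _ y :=
      ((differentiable_sT _).hasDerivAt).comp_hasFDerivAt y ((e2.mul_const (c n)).neg)
    have e4 := (e1.const_sub 1).mul (e2.mul e3)
    have e5 : HasFDerivAt (k n) (((1 - η y) * P n (Φ y)) • fderiv ℝ Φ y
      - (Φ y * T (-(Φ y * c n))) • fderiv ℝ η y) y := by
      refine e4.congr_fderiv ?_
      ext v
      simp [P]
      ring
    rw [gradient, e5.fderiv, map_sub, map_smul, map_smul]
    rfl
  have hout : ∀ n, ∀ y ∉ D, hessN d (x - y) (gradient (k n) y) = 0 := by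
    intro n y hy
    have hy' : 0 ≤ Φ y := by
      rw [hD] at hy; simpa using hy
    have hu : -(Φ y * c n) ≤ 0 := by
      have := mul_nonneg hy' (hcpos n).le
      linarith
    have : gradient (k n) y = 0 := by
      rw [hgrad]
      simp [P, T, deriv_sT_of_nonpos hu, Real.smoothTransition.zero_of_nonpos hu]
    rw [this, ← hessL_apply]; simp
  have hkout : ∀ n, ∀ y ∉ D, k n y = 0 := by
    intro n y hy
    have hy' : 0 ≤ Φ y := by
      rw [hD] at hy; simpa using hy
    have hu : -(Φ y * c n) ≤ 0 := by
      have := mul_nonneg hy' (hcpos n).le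
      linarith
    simp [k, T, Real.smoothTransition.zero_of_nonpos hu]
  have hzero : ∀ n, ∫ y in D, (P n (Φ y) • ((1 - η y) • hessN d (x - y) (gradient Φ y))
      - T (-(Φ y * c n)) • (Φ y • hessN d (x - y) (gradient η y))) = 0 := by
    intro n
    have e := integral_hess_gradient d (hk n)
      (HasCompactSupport.intro hDb.isCompact_closure
        (fun y hy => hkout n y (fun h => hy (subset_closure h)))) x ρ hρ (by
        intro y hy
        by_cases hyD : y ∈ D
        · simp [k, h1 y hy hyD]
        · exact hkout n y hyD)
    rw [← setIntegral_eq_integral_of_forall_compl_eq_zero (fun y hy => hout n y hy)] at e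
    rw [← e]
    congr 1
    ext1 y
    rw [hgrad, ← hessL_apply, ← hessL_apply, ← hessL_apply, map_sub, map_smul, map_smul]
    module
  have hlim := tendsto_integral_of_dominated_convergence (μ := volume.restrict D)
    (F := fun n y => (P n (Φ y) • ((1 - η y) • hessN d (x - y) (gradient Φ y))
      - T (-(Φ y * c n)) • (Φ y • hessN d (x - y) (gradient η y))))
    (f := fun y => ((1 - η y) • hessN d (x - y) (gradient Φ y))
      - (Φ y • hessN d (x - y) (gradient η y)))
    (fun y => (1 + M) * ‖(1 - η y) • hessN d (x - y) (gradient Φ y)‖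
      + ‖Φ y • hessN d (x - y) (gradient η y)‖) ?_ ?_ ?_ ?_
  · have hlim0 := tendsto_nhds_unique hlim (by simp only [hzero]; exact tendsto_const_nhds)
    rw [integral_sub ia ib] at hlim0
    exact sub_eq_zero.1 hlim0
  · intro n
    have hcT : Continuous T := Real.smoothTransition.continuous
    have hcT' : Continuous (deriv T) := continuous_deriv_sT
    have hcΦ := hΦ.continuous
    have q1 : Continuous (fun y => P n (Φ y)) := by
      simp only [P]; fun_prop
    have q2 : Continuous (fun y => T (-(Φ y * c n))) := by fun_prop
    exact (q1.aestronglyMeasurable.smul ia.aestronglyMeasurable).sub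
      (q2.aestronglyMeasurable.smul ib.aestronglyMeasurable)
  · exact (ia.norm.const_mul _).add ib.norm
  · intro n
    refine Filter.Eventually.of_forall fun y => ?_
    refine (norm_sub_le _ _).trans ?_
    have t0 : ∀ u, ‖T u‖ ≤ 1 := fun u => by
      rw [Real.norm_of_nonneg (Real.smoothTransition.nonneg u)]
      exact Real.smoothTransition.le_one u
    refine add_le_add ?_ ?_
    · rw [norm_smul]
      refine mul_le_mul_of_nonneg_right ?_ (norm_nonneg _)
      exact (norm_add_le _ _).trans (add_le_add (t0 _) (hM _))
    · rw [norm_smul]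
      exact mul_le_of_le_one_left (norm_nonneg _) (t0 _)
  · filter_upwards [ae_restrict_mem hDm] with y hy
    have hy' : Φ y < 0 := by rw [hD] at hy; exact hy
    refine tendsto_const_nhds.congr' ?_
    have ht : Filter.Tendsto c Filter.atTop Filter.atTop :=
      Filter.tendsto_atTop_add_const_right _ _ tendsto_natCast_atTop_atTop
    filter_upwards [ht.eventually_ge_atTop (1 / (-Φ y))] with n hn
    have hu : 1 ≤ -(Φ y * c n) := by
      rw [div_le_iff₀ (by linarith)] at hn
      linarith
    simp [P, T, deriv_sT_of_one_le hu, Real.smoothTransition.one_of_one_le hu]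


lemma integrableOn_norm_rpow (d : ℕ) (hd : 2 ≤ d) (s : ℝ) (hs : -(d:ℝ) < s) (x : EE d)
    {S : Set (EE d)} (hS : Bornology.IsBounded S) :
    IntegrableOn (fun y => ‖x - y‖ ^ s) S := by
  have : Nontrivial (EE d) := by
    have : Nonempty (Fin d) := ⟨⟨0, by omega⟩⟩
    infer_instance
  obtain ⟨r, hr⟩ := hS.subset_ball x
  have h1 : IntegrableOn (fun y : EE d => ‖y‖ ^ s) (ball 0 r) := by
    rw [integrableOn_fun_norm_addHaar volume (f := fun t : ℝ => t ^ s)]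
    have h2 : IntegrableOn (fun t : ℝ => t ^ ((d:ℝ) - 1 + s)) (Ioo 0 r) := by
      by_cases hr0 : 0 < r
      · exact (intervalIntegral.integrableOn_Ioo_rpow_iff hr0).2 (by linarith)
      · rw [Ioo_eq_empty hr0]; exact integrableOn_empty
    refine (integrableOn_congr_fun ?_ measurableSet_Ioo).1 h2
    intro t ht
    simp only [finrank_euclideanSpace, Fintype.card_fin, smul_eq_mul]
    rw [Real.rpow_add ht.1, ← Real.rpow_natCast, Nat.cast_sub (by omega)]
    simp
  have h3 : IntegrableOn (fun y => ‖x - y‖ ^ s) (ball x r) := by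
    rw [← integrable_indicator_iff measurableSet_ball] at h1 ⊢
    have := h1.comp_sub_left x
    refine this.congr (Filter.Eventually.of_forall fun y => ?_)
    simp only [indicator, mem_ball_zero_iff, mem_ball, dist_eq_norm, norm_sub_rev y x, sub_zero]
  exact h3.mono_set hr

lemma measurable_hessN (d : ℕ) (x : EE d) {g : EE d → EE d} (hg : Measurable g) :
    Measurable (fun y => hessN d (x - y) (g y)) := by
  unfold hessN
  fun_prop

lemma measurable_gradN (d : ℕ) : Measurable (gradN d) := by
  unfold gradN
  fun_prop

lemma norm_gradN_le (d : ℕ) (hd : 2 ≤ d) (y : EE d) :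
    ‖gradN d y‖ ≤ (sphereVol d)⁻¹ * ‖y‖ ^ (1 - (d:ℝ)) := by
  have hω := sphereVol_pos d hd
  rcases eq_or_ne y 0 with rfl | hy
  · simp [gradN]; positivity
  have hy' : 0 < ‖y‖ := norm_pos_iff.2 hy
  rw [gradN, norm_smul, norm_inv, norm_mul, Real.norm_of_nonneg hω.le, norm_pow, norm_norm,
    Real.rpow_sub hy', Real.rpow_one, Real.rpow_natCast]
  apply le_of_eq
  field_simp

lemma locallyIntegrable_gradN (d : ℕ) (hd : 2 ≤ d) : LocallyIntegrable (gradN d) := by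
  rw [locallyIntegrable_iff]
  intro K hK
  have h := (integrableOn_norm_rpow d hd (1 - (d:ℝ)) (by linarith) 0
    hK.isBounded).const_mul (sphereVol d)⁻¹
  refine Integrable.mono' h (measurable_gradN d).aestronglyMeasurable ?_
  refine Filter.Eventually.of_forall fun y => ?_
  simpa using norm_gradN_le d hd y

lemma integrable_commutator (d : ℕ) (hd : 2 ≤ d) (γ : ℝ) (hγ : 0 < γ) {D : Set (EE d)}
    (hDb : Bornology.IsBounded D) {g : EE d → EE d} (hg : Continuous g)
    (K : ℝ) (hK : ∀ x y, ‖g x - g y‖ ≤ K * ‖x - y‖ ^ γ) (x : EE d) :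
    IntegrableOn (fun y => hessN d (x - y) (g x - g y)) D volume := by
  have hω := sphereVol_pos d hd
  have h := (integrableOn_norm_rpow d hd (γ - (d:ℝ)) (by linarith) x
    hDb).const_mul ((sphereVol d)⁻¹ * (1 + d) * K)
  refine Integrable.mono' h
    (measurable_hessN d x (g := fun y => g x - g y) (by have := hg.measurable; fun_prop)).aestronglyMeasurable ?_
  refine Filter.Eventually.of_forall fun y => ?_
  rcases eq_or_ne x y with rfl | hxy
  · have h0 : hessN d (x - x) (g x - g x) = 0 := by simp [hessN]
    have hK0 : 0 ≤ K := by
      have : Nonempty (Fin d) := ⟨⟨0, by omega⟩⟩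
      obtain ⟨z, hz⟩ := exists_ne x
      have h1 := (norm_nonneg _).trans (hK x z)
      have : 0 < ‖x - z‖ := norm_pos_iff.2 (sub_ne_zero.2 hz.symm)
      exact nonneg_of_mul_nonneg_left h1 (by positivity)
    rw [h0, norm_zero]
    positivity
  · have hpos : 0 < ‖x - y‖ := norm_pos_iff.2 (sub_ne_zero.2 hxy)
    refine (norm_hessN_le d hd _ _).trans ?_
    rw [Real.rpow_sub hpos, Real.rpow_natCast]
    calc (sphereVol d)⁻¹ * (1 + (d:ℝ)) * (‖x - y‖ ^ d)⁻¹ * ‖g x - g y‖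
        ≤ (sphereVol d)⁻¹ * (1 + (d:ℝ)) * (‖x - y‖ ^ d)⁻¹ * (K * ‖x - y‖ ^ γ) := by
          gcongr; exact hK x y
      _ = _ := by rw [div_eq_mul_inv]; ring


lemma measurable_hessL (d : ℕ) : StronglyMeasurable (hessL d) := by
  have h1 : Continuous (fun z : EE d => (innerSL ℝ z).smulRight z) := by
    have : Continuous (fun z : EE d => ContinuousLinearMap.smulRightL ℝ (EE d) (EE d) (innerSL ℝ z) z) := by
      fun_prop
    exact this
  have h2 : ∀ n : ℕ, StronglyMeasurable (fun z : EE d => (‖z‖ ^ n)⁻¹) := fun n => by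
    apply Measurable.stronglyMeasurable
    fun_prop
  unfold hessL
  exact (((h2 d).smul_const _).sub (((h2 (d+2)).const_mul (d:ℝ)).smul h1.stronglyMeasurable)).const_smul
    (sphereVol d)⁻¹

lemma far_part (d : ℕ) (hd : 2 ≤ d) {m : EE d → ℝ} (hm : Integrable m) (x : EE d) (ρ : ℝ)
    (hρ : 0 < ρ) (h0 : ∀ y ∈ ball x ρ, m y = 0) :
    (∀ z ∈ ball x (ρ/2), Integrable (fun y => m y • gradN d (z - y))) ∧
    HasFDerivAt (fun z => ∫ y, m y • gradN d (z - y)) (∫ y, m y • hessL d (x - y)) x ∧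
    Integrable (fun y => m y • hessL d (x - y)) := by
  have hω := sphereVol_pos d hd
  have hfar : ∀ z ∈ ball x (ρ/2), ∀ y, m y ≠ 0 → ρ/2 ≤ ‖z - y‖ := by
    intro z hz y hy
    have h1 : ρ ≤ dist y x := by
      by_contra h
      exact hy (h0 y (by simpa using h))
    have h2 : dist y x ≤ dist z y + dist z x := by
      rw [dist_comm z y]; exact dist_triangle y z x
    rw [mem_ball] at hz
    rw [← dist_eq_norm]
    linarith
  have hF : ∀ z, AEStronglyMeasurable (fun y => m y • gradN d (z - y)) := fun z =>
    hm.aestronglyMeasurable.smul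
      ((measurable_gradN d).comp (measurable_const.sub measurable_id)).aestronglyMeasurable
  have hF' : ∀ z, AEStronglyMeasurable (fun y => m y • hessL d (z - y)) := fun z =>
    hm.aestronglyMeasurable.smul
      ((measurable_hessL d).comp_measurable (measurable_const.sub measurable_id)).aestronglyMeasurable
  have hIntg : ∀ z ∈ ball x (ρ/2), Integrable (fun y => m y • gradN d (z - y)) := by
    intro z hz
    refine Integrable.mono' (hm.norm.const_mul ((sphereVol d)⁻¹ * (ρ/2) ^ (1 - (d:ℝ)))) (hF z) ?_
    refine Filter.Eventually.of_forall fun y => ?_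
    rw [norm_smul]
    by_cases hy : m y = 0
    · simp [hy]
    rw [mul_comm]
    refine mul_le_mul_of_nonneg_right ?_ (norm_nonneg _)
    refine (norm_gradN_le d hd _).trans ?_
    refine mul_le_mul_of_nonneg_left ?_ (by positivity)
    refine Real.rpow_le_rpow_of_nonpos (by positivity) (hfar z hz y hy) ?_
    have : (2:ℝ) ≤ d := by exact_mod_cast hd
    linarith
  have hb : ∀ y, ∀ z ∈ ball x (ρ/2), ‖m y • hessL d (z - y)‖
      ≤ ((sphereVol d)⁻¹ * (1 + d) * ((ρ/2) ^ d)⁻¹) * ‖m y‖ := by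
    intro y z hz
    rw [norm_smul]
    by_cases hy : m y = 0
    · simp [hy]
    rw [mul_comm]
    refine mul_le_mul_of_nonneg_right ?_ (norm_nonneg _)
    refine (norm_hessL_le d hd _).trans ?_
    have := hfar z hz y hy
    gcongr
  have hx : x ∈ ball x (ρ/2) := mem_ball_self (by positivity)
  refine ⟨hIntg, ?_, ?_⟩
  · refine hasFDerivAt_integral_of_dominated_of_fderiv_le (s := ball x (ρ/2))
      (F := fun z y => m y • gradN d (z - y)) (F' := fun z y => m y • hessL d (z - y))
      (bound := fun y => ((sphereVol d)⁻¹ * (1 + d) * ((ρ/2) ^ d)⁻¹) * ‖m y‖)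
      (isOpen_ball.mem_nhds hx) (Filter.Eventually.of_forall hF) (hIntg x hx) (hF' x)
      (Filter.Eventually.of_forall hb) (hm.norm.const_mul _) ?_
    refine Filter.Eventually.of_forall fun y z hz => ?_
    by_cases hy : m y = 0
    · have e0 : (0:ℝ) • hessL d (z - y) = 0 := by
        ext1 v; simp
      simp only [hy, zero_smul, e0]; exact hasFDerivAt_const (𝕜 := ℝ) (0 : EE d) z
    have hne : z - y ≠ 0 := by
      have := hfar z hz y hy
      intro h; rw [h, norm_zero] at this; linarith
    have := ((hasFDerivAt_gradN d (z - y) hne).comp z ((hasFDerivAt_id z).sub_const y)).const_smul (m y)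
    exact this
  · exact Integrable.mono' (hm.norm.const_mul _) (hF' x)
      (Filter.Eventually.of_forall fun y => hb y x hx)

lemma near_part (d : ℕ) (hd : 2 ≤ d) {η : EE d → ℝ} (hη : ContDiff ℝ 1 η)
    (hc : HasCompactSupport η) (x : EE d) :
    (∀ z, Integrable (fun y => η y • gradN d (z - y))) ∧
    DifferentiableAt ℝ (fun z => ∫ y, η y • gradN d (z - y)) x ∧
    ∀ w, fderiv ℝ (fun z => ∫ y, η y • gradN d (z - y)) x w
      = ∫ t, (fderiv ℝ η (x - t) w) • gradN d t := by
  have hL := locallyIntegrable_gradN d hd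
  set L : EE d →L[ℝ] ℝ →L[ℝ] EE d := (ContinuousLinearMap.lsmul ℝ ℝ).flip with hLdef
  have hex := hc.convolutionExists_right L hL hη.continuous
  have hi : ∀ z, Integrable (fun y => η y • gradN d (z - y)) := by
    intro z
    have h1 := (hex z)
    unfold ConvolutionExistsAt at h1
    have h2 := h1.comp_sub_left z
    simpa [L] using h2
  have heq : (fun z => ∫ y, η y • gradN d (z - y)) = convolution (gradN d) η L volume := by
    ext1 z
    rw [convolution_eq_swap]
    simp [L]
  have hder := hc.hasFDerivAt_convolution_right L hL hη x
  refine ⟨hi, ?_, ?_⟩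
  · rw [heq]; exact hder.differentiableAt
  · intro w
    rw [heq, hder.fderiv, convolution_precompR_apply L hL (hc.fderiv ℝ)
      (hη.continuous_fderiv one_ne_zero)]
    simp [convolution, L]


/-- radial cutoff profile -/
noncomputable def cutη (d : ℕ) (ε : ℝ) (x y : EE d) : ℝ :=
  Real.smoothTransition (2 - ‖y - x‖ ^ 2 / ε ^ 2)

noncomputable def kap (d : ℕ) (ε : ℝ) (z : EE d) : ℝ :=
  (2 / ε ^ 2) * deriv Real.smoothTransition (2 - ‖z‖ ^ 2 / ε ^ 2)

noncomputable def cC (d : ℕ) (ε : ℝ) (z : EE d) : ℝ :=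
  (sphereVol d)⁻¹ * (‖z‖ ^ d)⁻¹ * kap d ε z

lemma contDiff_cutη (d : ℕ) (ε : ℝ) (x : EE d) : ContDiff ℝ 1 (cutη d ε x) := by
  have h1 : ContDiff ℝ 1 (fun y : EE d => 2 - ‖y - x‖ ^ 2 / ε ^ 2) :=
    contDiff_const.sub (((contDiff_id.sub contDiff_const).norm_sq ℝ).div_const _)
  exact (Real.smoothTransition.contDiff (n := 1)).comp h1

lemma hasFDerivAt_cutη (d : ℕ) (ε : ℝ) (x y : EE d) :
    HasFDerivAt (cutη d ε x) (-(kap d ε (y - x)) • innerSL ℝ (y - x)) y := by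
  have h1 : HasFDerivAt (fun y : EE d => ‖y - x‖ ^ 2) (2 • innerSL ℝ (y - x)) y := by
    have := (hasStrictFDerivAt_norm_sq (y - x)).hasFDerivAt.comp y ((hasFDerivAt_id y).sub_const x)
    exact this
  have h2 := (differentiable_sT (2 - ‖y - x‖ ^ 2 / ε ^ 2)).hasDerivAt.comp_hasFDerivAt y
    ((h1.mul_const ((ε ^ 2)⁻¹)).const_sub 2)
  refine h2.congr_fderiv ?_
  ext v
  simp [kap]
  ring

lemma gradient_cutη (d : ℕ) (ε : ℝ) (x y : EE d) :
    gradient (cutη d ε x) y = (-(kap d ε (y - x))) • (y - x) := by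
  rw [gradient, (hasFDerivAt_cutη d ε x y).fderiv, map_smul]
  congr 1
  rw [LinearIsometryEquiv.symm_apply_eq]
  rfl

lemma cutη_near (d : ℕ) (ε : ℝ) (hε : 0 < ε) (x y : EE d) (h : ‖y - x‖ ≤ ε) :
    cutη d ε x y = 1 := by
  apply Real.smoothTransition.one_of_one_le
  have : ‖y - x‖ ^ 2 / ε ^ 2 ≤ 1 := by
    rw [div_le_one (by positivity)]; gcongr
  linarith

lemma cutη_far (d : ℕ) (ε : ℝ) (hε : 0 < ε) (x y : EE d) (h : 2 * ε ≤ ‖y - x‖) :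
    cutη d ε x y = 0 := by
  apply Real.smoothTransition.zero_of_nonpos
  have : 2 ≤ ‖y - x‖ ^ 2 / ε ^ 2 := by
    rw [le_div_iff₀ (by positivity)]; nlinarith
  linarith

lemma kap_near (d : ℕ) (ε : ℝ) (hε : 0 < ε) (z : EE d) (h : ‖z‖ ≤ ε) :
    kap d ε z = 0 := by
  have : ‖z‖ ^ 2 / ε ^ 2 ≤ 1 := by
    rw [div_le_one (by positivity)]; gcongr
  simp [kap, deriv_sT_of_one_le (u := 2 - ‖z‖ ^ 2 / ε ^ 2) (by linarith)]

lemma kap_far (d : ℕ) (ε : ℝ) (hε : 0 < ε) (z : EE d) (h : 2 * ε ≤ ‖z‖) :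
    kap d ε z = 0 := by
  have : 2 ≤ ‖z‖ ^ 2 / ε ^ 2 := by
    rw [le_div_iff₀ (by positivity)]; nlinarith
  simp [kap, deriv_sT_of_nonpos (u := 2 - ‖z‖ ^ 2 / ε ^ 2) (by linarith)]

lemma cC_nonneg (d : ℕ) (hd : 2 ≤ d) (ε : ℝ) (z : EE d) : 0 ≤ cC d ε z := by
  have := sphereVol_pos d hd
  have := deriv_sT_nonneg (2 - ‖z‖ ^ 2 / ε ^ 2)
  unfold cC kap
  positivity

lemma cC_far (d : ℕ) (ε : ℝ) (hε : 0 < ε) (z : EE d) (h : 2 * ε ≤ ‖z‖) :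
    cC d ε z = 0 := by
  simp [cC, kap_far d ε hε z h]

lemma continuous_cC (d : ℕ) (ε : ℝ) (hε : 0 < ε) : Continuous (cC d ε) := by
  rw [continuous_iff_continuousAt]
  intro z
  have hk : Continuous (kap d ε) := by
    have := continuous_deriv_sT
    unfold kap
    fun_prop
  by_cases hz : z = 0
  · have : cC d ε =ᶠ[nhds z] fun _ => 0 := by
      filter_upwards [ball_mem_nhds z hε] with y hy
      rw [hz, mem_ball_zero_iff] at hy
      simp [cC, kap_near d ε hε y hy.le]
    exact (continuousAt_const).congr this.symm
  · unfold cC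
    have h1 : ContinuousAt (fun y : EE d => (‖y‖ ^ d)⁻¹) z :=
      ContinuousAt.inv₀ (by fun_prop) (pow_ne_zero _ (norm_ne_zero_iff.2 hz))
    exact (continuousAt_const.mul h1).mul hk.continuousAt

lemma integrable_cC (d : ℕ) (ε : ℝ) (hε : 0 < ε) {F : Type*} [NormedAddCommGroup F]
    [NormedSpace ℝ F] {g : EE d → F} (hg : Continuous g) :
    Integrable (fun z => cC d ε z • g z) := by
  refine integrable_of_contOn_compact d (isCompact_closedBall 0 (2 * ε))
    ((continuous_cC d ε hε).smul hg).continuousOn ?_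
  intro y hy
  rw [cC_far d ε hε y (by simpa using (not_le.1 (fun h => hy (by simpa using h))).le), zero_smul]

lemma cC_congr (d : ℕ) (ε : ℝ) (z z' : EE d) (h : ‖z‖ = ‖z'‖) : cC d ε z = cC d ε z' := by
  simp [cC, kap, h]

lemma integral_cC_normsq (d : ℕ) (hd : 2 ≤ d) (ε : ℝ) (hε : 0 < ε) :
    ∫ z : EE d, cC d ε z * ‖z‖ ^ 2 = 1 := by
  have hω := sphereVol_pos d hd
  have : Nontrivial (EE d) := by
    have : Nonempty (Fin d) := ⟨⟨0, by omega⟩⟩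
    infer_instance
  have h := integral_fun_norm_addHaar (E := EE d) volume (fun r : ℝ => (sphereVol d)⁻¹ * (r ^ d)⁻¹ *
    ((2 / ε ^ 2) * deriv Real.smoothTransition (2 - r ^ 2 / ε ^ 2)) * r ^ 2)
  have h1 : ∫ y in Ioi (0:ℝ), (2 * y / ε ^ 2) * deriv Real.smoothTransition (2 - y ^ 2 / ε ^ 2) = 1 := by
    have hd1 : ∀ y ∈ Ici (0:ℝ), HasDerivAt (fun y : ℝ => -Real.smoothTransition (2 - y ^ 2 / ε ^ 2))
        ((2 * y / ε ^ 2) * deriv Real.smoothTransition (2 - y ^ 2 / ε ^ 2)) y := by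
      intro y _
      have e1 : HasDerivAt (fun y : ℝ => 2 - y ^ 2 / ε ^ 2) (-(2 * y / ε ^ 2)) y := by
        simpa using ((hasDerivAt_pow 2 y).div_const (ε ^ 2)).const_sub 2
      have e2 := ((differentiable_sT (2 - y ^ 2 / ε ^ 2)).hasDerivAt.comp y e1).neg
      refine e2.congr_deriv ?_
      ring
    have := integral_Ioi_of_hasDerivAt_of_nonneg' (l := 0) hd1 (fun y hy => by
      have := deriv_sT_nonneg (2 - y ^ 2 / ε ^ 2)
      have hy' : 0 < y := hy
      positivity) (by
      refine tendsto_const_nhds.congr' ?_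
      filter_upwards [Filter.eventually_ge_atTop (2 * ε)] with y hy
      rw [Real.smoothTransition.zero_of_nonpos, neg_zero]
      have : 2 ≤ y ^ 2 / ε ^ 2 := by
        rw [le_div_iff₀ (by positivity)]; nlinarith
      linarith)
    rw [this]
    simp [Real.smoothTransition.one_of_one_le]
  have h2 : ∫ y in Ioi (0:ℝ), y ^ (Module.finrank ℝ (EE d) - 1) • ((sphereVol d)⁻¹ * (y ^ d)⁻¹ *
    ((2 / ε ^ 2) * deriv Real.smoothTransition (2 - y ^ 2 / ε ^ 2)) * y ^ 2) = (sphereVol d)⁻¹ := by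
    trans (sphereVol d)⁻¹ * ∫ y in Ioi (0:ℝ), (2*y/ε^2) * deriv Real.smoothTransition (2 - y^2/ε^2)
    swap
    · rw [h1, mul_one]
    rw [← integral_const_mul]
    refine setIntegral_congr_fun measurableSet_Ioi fun y hy => ?_
    have hy' : 0 < y := hy
    simp only [finrank_euclideanSpace, Fintype.card_fin, smul_eq_mul, mul_one]
    obtain ⟨n, rfl⟩ : ∃ n, d = n + 1 := ⟨d - 1, by omega⟩
    simp only [Nat.add_sub_cancel]
    field_simp
    ring
  rw [h2] at h
  have h3 : ∫ z : EE d, cC d ε z * ‖z‖ ^ 2 = _ := h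
  rw [h3]
  simp only [finrank_euclideanSpace, Fintype.card_fin, smul_eq_mul, nsmul_eq_mul]
  rw [← mul_assoc, show (d:ℝ) * volume.real (ball (0 : EE d) 1) = sphereVol d from rfl]
  exact mul_inv_cancel₀ hω.ne'

lemma integral_isometry (d : ℕ) {F : Type*} [NormedAddCommGroup F] [NormedSpace ℝ F]
    (R : EE d ≃ₗᵢ[ℝ] EE d) (f : EE d → F) : ∫ z, f (R z) = ∫ z, f z :=
  R.measurePreserving.integral_comp R.toHomeomorph.measurableEmbedding f

lemma integral_cC_odd (d : ℕ) (ε : ℝ) : ∫ z : EE d, cC d ε z • z = 0 := by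
  have h := integral_isometry d (LinearIsometryEquiv.neg ℝ) (fun z : EE d => cC d ε z • z)
  simp only [LinearIsometryEquiv.coe_neg, smul_neg, integral_neg,
    cC_congr d ε _ _ (norm_neg _)] at h
  set I := ∫ z : EE d, cC d ε z • z with hI
  have h2 : (2:ℝ) • I = 0 := by
    rw [two_smul]
    nth_rewrite 1 [← h]
    simp
  simpa using h2

lemma integral_cC_inner (d : ℕ) (hd : 2 ≤ d) (ε : ℝ) (hε : 0 < ε) (w : EE d) :
    ∫ z : EE d, cC d ε z • ((⟪z, w⟫ : ℝ) • z) = (1 / (d:ℝ)) • w := by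
  have hd0 : (d:ℝ) ≠ 0 := by positivity
  set b := EuclideanSpace.basisFun (Fin d) ℝ with hb
  let T : EE d → EE d := fun w => ∫ z : EE d, cC d ε z • ((⟪z, w⟫ : ℝ) • z)
  have hi : ∀ w : EE d, Integrable (fun z : EE d => cC d ε z • ((⟪z, w⟫ : ℝ) • z)) := fun w =>
    integrable_cC d ε hε (by fun_prop)
  have hS : ∀ u v : EE d, ‖u‖ = ‖v‖ → ∫ z : EE d, cC d ε z • (⟪z, u⟫ : ℝ) ^ 2
      = ∫ z : EE d, cC d ε z • (⟪z, v⟫ : ℝ) ^ 2 := by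
    intro u v huv
    set R := (ℝ ∙ (u - v))ᗮ.reflection
    have hR : R u = v := Submodule.reflection_sub huv
    rw [← integral_isometry d R (fun z : EE d => cC d ε z • (⟪z, v⟫ : ℝ) ^ 2)]
    congr 1
    ext1 z
    rw [cC_congr d ε (R z) z (R.norm_map z), ← hR, R.inner_map_map]
  have hin : ∀ w, ⟪w, T w⟫ = ∫ z : EE d, cC d ε z • (⟪z, w⟫ : ℝ) ^ 2 := by
    intro w
    rw [← integral_inner (hi w)]
    congr 1
    ext1 z
    rw [inner_smul_right, inner_smul_right, real_inner_comm, smul_eq_mul]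
    ring
  have hsum : ∑ j, ∫ z : EE d, cC d ε z • (⟪z, b j⟫ : ℝ) ^ 2 = 1 := by
    rw [← integral_finsetSum _ (fun j _ => integrable_cC d ε hε (by fun_prop)),
      ← integral_cC_normsq d hd ε hε]
    congr 1
    ext1 z
    rw [← Finset.smul_sum, b.sum_sq_inner_left z, smul_eq_mul]
  have hSb : ∀ j, ∫ z : EE d, cC d ε z • (⟪z, b j⟫ : ℝ) ^ 2 = 1 / d := by
    intro j
    have : ∀ i, ∫ z : EE d, cC d ε z • (⟪z, b i⟫ : ℝ) ^ 2 = ∫ z : EE d, cC d ε z • (⟪z, b j⟫ : ℝ) ^ 2 :=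
      fun i => hS _ _ (by simp)
    rw [Finset.sum_congr rfl (fun i _ => this i)] at hsum
    simp only [Finset.sum_const, Finset.card_univ, Fintype.card_fin, nsmul_eq_mul] at hsum
    rw [eq_div_iff hd0, mul_comm]; exact hsum
  have hTb : ∀ j, T (b j) = (1 / (d:ℝ)) • b j := by
    intro j
    set R := (ℝ ∙ (b j)).reflection
    have hRb : R (b j) = b j := Submodule.reflection_mem_subspace_eq_self
      (Submodule.mem_span_singleton_self _)
    have hRT : R (T (b j)) = T (b j) := by
      have e1 : R (T (b j)) = ∫ z : EE d, R (cC d ε z • ((⟪z, b j⟫ : ℝ) • z)) :=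
        (R.toContinuousLinearEquiv.toContinuousLinearMap.integral_comp_comm (hi (b j))).symm
      rw [e1]
      simp only [T]
      rw [← integral_isometry d R (fun z : EE d => cC d ε z • ((⟪z, b j⟫ : ℝ) • z))]
      congr 1
      ext1 z
      rw [cC_congr d ε (R z) z (R.norm_map z), map_smul, map_smul]
      conv_rhs => rw [← hRb, R.inner_map_map]
    have hmem := (Submodule.reflection_eq_self_iff _).1 hRT
    obtain ⟨a, ha⟩ := Submodule.mem_span_singleton.1 hmem
    have h1 := hin (b j)
    rw [hSb, ← ha, inner_smul_right, real_inner_self_eq_norm_sq] at h1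
    rw [← ha]
    simp at h1
    rw [h1]; simp
  have hw := b.sum_repr' w
  have hlin : T w = ∑ j, ⟪b j, w⟫ • T (b j) := by
    simp only [T]
    simp_rw [← integral_smul]
    have hi2 : ∀ j ∈ Finset.univ, Integrable (fun z : EE d =>
        (⟪b j, w⟫:ℝ) • (cC d ε z • ((⟪z, b j⟫:ℝ) • z))) := fun j _ =>
      (hi (b j)).smul (⟪b j, w⟫:ℝ)
    rw [← integral_finsetSum _ hi2]
    congr 1
    ext1 z
    conv_lhs => rw [← hw]
    rw [inner_sum, Finset.sum_smul, Finset.smul_sum]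
    refine Finset.sum_congr rfl fun j _ => ?_
    rw [inner_smul_right]
    module
  change T w = _
  rw [hlin]
  simp_rw [hTb]
  conv_rhs => rw [← hw, Finset.smul_sum]
  refine Finset.sum_congr rfl fun j _ => ?_
  rw [smul_comm]


lemma hess_grad_cut (d : ℕ) (ε : ℝ) (x y : EE d) :
    hessN d (x - y) (gradient (cutη d ε x) y)
      = ((d:ℝ) - 1) • (cC d ε (y - x) • (y - x)) := by
  rw [gradient_cutη]
  obtain ⟨z, hz⟩ : ∃ z, z = y - x := ⟨_, rfl⟩
  rw [← neg_sub y x, ← hz]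
  unfold hessN cC
  rcases eq_or_ne z 0 with h | h
  · simp [h]
  have hn : ‖z‖ ≠ 0 := norm_ne_zero_iff.2 h
  rw [norm_neg, inner_smul_right, inner_neg_left, real_inner_self_eq_norm_sq]
  have e : (‖z‖ ^ (d + 2))⁻¹ = (‖z‖ ^ d)⁻¹ * (‖z‖ ^ 2)⁻¹ := by rw [pow_add, mul_inv]
  rw [e]
  have e2 : (d:ℝ) * ((‖z‖ ^ d)⁻¹ * (‖z‖ ^ 2)⁻¹) * (-kap d ε z * -‖z‖ ^ 2)
      = (d:ℝ) * (‖z‖ ^ d)⁻¹ * kap d ε z := by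
    field_simp
  rw [e2]
  module

lemma integral_fderiv_cut (d : ℕ) (hd : 2 ≤ d) (ε : ℝ) (hε : 0 < ε) (x w : EE d) :
    ∫ t, (fderiv ℝ (cutη d ε x) (x - t) w) • gradN d t = (1 / (d:ℝ)) • w := by
  rw [← integral_cC_inner d hd ε hε w]
  congr 1
  ext1 t
  rw [(hasFDerivAt_cutη d ε x (x - t)).fderiv]
  have e : x - t - x = -t := by abel
  rw [e]
  have hk : kap d ε (-t) = kap d ε t := by simp [kap]
  rw [hk]
  simp only [ContinuousLinearMap.smul_apply, innerSL_apply_apply, inner_neg_left, smul_eq_mul]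
  unfold gradN cC
  rw [mul_inv]
  module

lemma hasCompactSupport_cutη (d : ℕ) (ε : ℝ) (hε : 0 < ε) (x : EE d) :
    HasCompactSupport (cutη d ε x) := by
  refine HasCompactSupport.intro (isCompact_closedBall x (2 * ε)) ?_
  intro y hy
  refine cutη_far d ε hε x y ?_
  rw [mem_closedBall, dist_eq_norm, not_le] at hy
  exact hy.le

lemma tendsto_taylor (d : ℕ) (hd : 2 ≤ d) {Φ : EE d → ℝ} (hΦ : ContDiff ℝ 1 Φ) (x : EE d) :
    Filter.Tendsto (fun ε : ℝ => ∫ z : EE d, cC d ε z • (Φ (x + z) • z))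
      (nhdsWithin 0 (Ioi 0)) (nhds ((1 / (d:ℝ)) • gradient Φ x)) := by
  set w := gradient Φ x with hw
  rw [Metric.tendsto_nhds]
  intro τ hτ
  have hdiff : HasFDerivAt Φ (fderiv ℝ Φ x) x :=
    (hΦ.differentiable (by norm_num) x).hasFDerivAt
  have h1 := hdiff.isLittleO
  have h2 := h1.def (half_pos hτ)
  obtain ⟨δ, hδ, h3⟩ := Metric.eventually_nhds_iff.1 h2
  have h4 : ∀ᶠ ε : ℝ in nhdsWithin 0 (Ioi 0), ε ∈ Ioo (0:ℝ) (δ / 2) :=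
    Ioo_mem_nhdsGT (by positivity)
  filter_upwards [h4] with ε hε
  obtain ⟨hε0, hε1⟩ := hε
  have hcont := hΦ.continuous
  have i1 : Integrable (fun z : EE d => cC d ε z • (Φ (x + z) • z)) :=
    integrable_cC d ε hε0 (by fun_prop)
  have i2 : Integrable (fun z : EE d => cC d ε z • ((⟪z, w⟫ : ℝ) • z)) :=
    integrable_cC d ε hε0 (by fun_prop)
  have i3 : Integrable (fun z : EE d => Φ x • (cC d ε z • z)) :=
    (integrable_cC d ε hε0 continuous_id).smul (Φ x)
  have e3 : ∫ z : EE d, Φ x • (cC d ε z • z) = 0 := by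
    rw [integral_smul, integral_cC_odd, smul_zero]
  have i4 : Integrable (fun z : EE d => cC d ε z * ‖z‖ ^ 2) :=
    integrable_cC d ε hε0 (by fun_prop)
  rw [dist_eq_norm, ← integral_cC_inner d hd ε hε0 w, ← integral_sub i1 i2]
  have e4 : ∫ z : EE d, (cC d ε z • (Φ (x + z) • z) - cC d ε z • ((⟪z, w⟫ : ℝ) • z))
      = ∫ z : EE d, cC d ε z • ((Φ (x + z) - Φ x - ⟪z, w⟫) • z) := by
    have i5 : Integrable (fun z : EE d => cC d ε z • (Φ (x + z) • z) - cC d ε z • ((⟪z, w⟫ : ℝ) • z)) :=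
      i1.sub i2
    rw [← sub_zero (∫ z : EE d, (cC d ε z • (Φ (x + z) • z) - cC d ε z • ((⟪z, w⟫ : ℝ) • z))),
      ← e3, ← integral_sub i5 i3]
    congr 1
    ext1 z
    module
  rw [e4]
  have hb : ‖∫ z : EE d, cC d ε z • ((Φ (x + z) - Φ x - ⟪z, w⟫) • z)‖
      ≤ ∫ z : EE d, τ / 2 * (cC d ε z * ‖z‖ ^ 2) := by
    refine norm_integral_le_of_norm_le (i4.const_mul _) (Filter.Eventually.of_forall fun z => ?_)
    have hc := cC_nonneg d hd ε z
    by_cases hz : 2 * ε ≤ ‖z‖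
    · rw [cC_far d ε hε0 z hz]; simp
    · have h5 := @h3 (x + z) (by simp only [dist_self_add_left]; linarith)
      rw [add_sub_cancel_left, ← inner_gradient d, real_inner_comm] at h5
      rw [norm_smul, norm_smul, Real.norm_of_nonneg hc]
      calc cC d ε z * (‖Φ (x + z) - Φ x - ⟪z, w⟫‖ * ‖z‖)
          ≤ cC d ε z * (τ / 2 * ‖z‖ * ‖z‖) := by gcongr
        _ = _ := by ring
  rw [integral_const_mul, integral_cC_normsq d hd ε hε0] at hb
  linarith

lemma deriv_inside (d : ℕ) (hd : 2 ≤ d) {D : Set (EE d)} (hDm : MeasurableSet D)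
    (hDb : Bornology.IsBounded D) (x : EE d) (ε : ℝ) (hε : 0 < ε) (hb : ball x (2 * ε) ⊆ D)
    (w : EE d) :
    DifferentiableAt ℝ (fun z => ∫ y in D, gradN d (z - y)) x ∧
    fderiv ℝ (fun z => ∫ y in D, gradN d (z - y)) x w
      = (∫ y in D, (1 - cutη d ε x y) • hessN d (x - y) w) + (1 / (d:ℝ)) • w := by
  set η := cutη d ε x with hη
  have hηD : ∀ y, y ∉ D → η y = 0 := by
    intro y hy
    refine cutη_far d ε hε x y ?_
    by_contra h
    exact hy (hb (by rw [mem_ball, dist_eq_norm]; exact not_le.1 h))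
  have hcs := hasCompactSupport_cutη d ε hε x
  have hcd := contDiff_cutη d ε x
  set m : EE d → ℝ := fun y => D.indicator (fun _ => (1:ℝ)) y - η y with hm
  have hmi : Integrable m := by
    refine Integrable.sub ?_ (hcd.continuous.integrable_of_hasCompactSupport hcs)
    rw [integrable_indicator_iff hDm]
    exact integrableOn_const hDb.measure_lt_top.ne
  have hm0 : ∀ y ∈ ball x ε, m y = 0 := by
    intro y hy
    have hyD : y ∈ D := hb (ball_subset_ball (by linarith) hy)
    rw [mem_ball, dist_eq_norm] at hy
    simp only [hm, indicator_of_mem hyD, hη]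
    rw [cutη_near d ε hε x y hy.le, sub_self]
  obtain ⟨f1, f2, f3⟩ := far_part d hd hmi x ε hε hm0
  obtain ⟨n1, n2, n3⟩ := near_part d hd hcd hcs x
  have hloc : (fun z => ∫ y in D, gradN d (z - y)) =ᶠ[nhds x]
      fun z => (∫ y, m y • gradN d (z - y)) + ∫ y, η y • gradN d (z - y) := by
    filter_upwards [ball_mem_nhds x (half_pos hε)] with z hz
    rw [← integral_add (f1 z hz) (n1 z), ← integral_indicator hDm]
    congr 1
    ext1 y
    by_cases hy : y ∈ D
    · simp [hm, hy, ← add_smul, hη]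
    · simp [hm, hy, hη]
  have hder := f2.add n2.hasFDerivAt
  have hder2 := hder.congr_of_eventuallyEq hloc
  refine ⟨hder2.differentiableAt, ?_⟩
  rw [hder2.fderiv, ContinuousLinearMap.add_apply, n3, integral_fderiv_cut d hd ε hε x w,
    ContinuousLinearMap.integral_apply f3, ← integral_indicator hDm]
  congr 2
  ext1 y
  by_cases hy : y ∈ D
  · simp [hm, hy, hessL_apply]
  · simp [hm, hy, hηD y hy]

lemma outside_case (d : ℕ) (hd : 2 ≤ d) {D : Set (EE d)} {Φ : EE d → ℝ} (hDm : MeasurableSet D)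
    (hDb : Bornology.IsBounded D) (hΦ : ContDiff ℝ 1 Φ) (hD : D = {x | Φ x < 0})
    (x : EE d) (ρ : ℝ) (hρ : 0 < ρ) (hb : ∀ y ∈ ball x ρ, y ∉ D) :
    DifferentiableAt ℝ (fun z => ∫ y in D, gradN d (z - y)) x ∧
    (∫ y in D, hessN d (x - y) (gradient Φ x - gradient Φ y))
      = fderiv ℝ (fun z => ∫ y in D, gradN d (z - y)) x (gradient Φ x) := by
  set w := gradient Φ x with hw
  set m : EE d → ℝ := D.indicator (fun _ => (1:ℝ)) with hm
  have hmi : Integrable m := by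
    rw [integrable_indicator_iff hDm]
    exact integrableOn_const hDb.measure_lt_top.ne
  have hm0 : ∀ y ∈ ball x ρ, m y = 0 := fun y hy => indicator_of_notMem (hb y hy) _
  obtain ⟨f1, f2, f3⟩ := far_part d hd hmi x ρ hρ hm0
  have hloc : (fun z => ∫ y in D, gradN d (z - y)) = fun z => (∫ y, m y • gradN d (z - y)) := by
    ext1 z
    rw [← integral_indicator hDm]
    congr 1
    ext1 y
    by_cases hy : y ∈ D
    · simp [hm, hy]
    · simp [hm, hy]
  rw [hloc]
  refine ⟨f2.differentiableAt, ?_⟩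
  rw [f2.fderiv, ContinuousLinearMap.integral_apply f3]
  obtain ⟨c1, c2, c3⟩ := cut_identity d (η := fun _ => 0) hDm hDb hΦ hD contDiff_const x ρ hρ
    (fun y hy hyD => absurd hyD (hb y hy))
  have i1 := intOn_hess d hDm hDb x ρ hρ (q := fun _ => 1) (g := fun _ => w) continuous_const
    continuous_const (fun y hy hyD => absurd hyD (hb y hy))
  have hz : ∀ u : EE d, hessN d u 0 = 0 := fun u => by simp [hessN]
  have hg0 : ∀ y : EE d, gradient (fun _ : EE d => (0:ℝ)) y = 0 := fun y => by simp [gradient]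
  simp only [hg0, hz, smul_zero, integral_zero, sub_zero, one_smul] at c1 c3 i1
  have e1 : ∫ y in D, hessN d (x - y) (w - gradient Φ y)
      = ∫ y in D, (hessN d (x - y) w - hessN d (x - y) (gradient Φ y)) := by
    congr 1
    ext1 y
    simp only [← hessL_apply, map_sub]
  rw [e1, integral_sub i1 c1, c3, sub_zero, ← integral_indicator hDm]
  congr 1
  ext1 y
  by_cases hy : y ∈ D
  · simp [hm, hy, hessL_apply]
  · simp [hm, hy]

lemma inside_eps (d : ℕ) (hd : 2 ≤ d) {D : Set (EE d)} {Φ : EE d → ℝ} (hDm : MeasurableSet D)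
    (hDb : Bornology.IsBounded D) (hΦ : ContDiff ℝ 1 Φ) (hD : D = {x | Φ x < 0})
    (x : EE d) (ε : ℝ) (hε : 0 < ε) (hb : ball x (2 * ε) ⊆ D) :
    (∫ y in D, (1 - cutη d ε x y) • hessN d (x - y) (gradient Φ x - gradient Φ y))
      = fderiv ℝ (fun z => ∫ y in D, gradN d (z - y)) x (gradient Φ x)
        - (1 / (d:ℝ)) • gradient Φ x
        - ((d:ℝ) - 1) • ∫ z : EE d, cC d ε z • (Φ (x + z) • z) := by
  set w := gradient Φ x with hw
  have hcd := contDiff_cutη d ε x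
  have hc := hcd.continuous
  have h1 : ∀ y ∈ ball x ε, y ∈ D → cutη d ε x y = 1 := by
    intro y hy _
    rw [mem_ball, dist_eq_norm] at hy
    exact cutη_near d ε hε x y hy.le
  obtain ⟨c1, c2, c3⟩ := cut_identity d hDm hDb hΦ hD hcd x ε hε h1
  have i1 := intOn_hess d hDm hDb x ε hε (q := fun y => 1 - cutη d ε x y) (g := fun _ => w)
    (by fun_prop) continuous_const (fun y hy hyD => by simp [h1 y hy hyD])
  have e1 : ∫ y in D, (1 - cutη d ε x y) • hessN d (x - y) (w - gradient Φ y)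
      = ∫ y in D, ((1 - cutη d ε x y) • hessN d (x - y) w
          - (1 - cutη d ε x y) • hessN d (x - y) (gradient Φ y)) := by
    congr 1
    ext1 y
    simp only [← hessL_apply, map_sub, smul_sub]
  have e2 : ∫ y in D, Φ y • hessN d (x - y) (gradient (cutη d ε x) y)
      = ((d:ℝ) - 1) • ∫ z : EE d, cC d ε z • (Φ (x + z) • z) := by
    rw [← integral_indicator hDm, ← integral_smul,
      ← integral_sub_right_eq_self (fun z : EE d => ((d:ℝ) - 1) • cC d ε z • (Φ (x + z) • z)) x]
    congr 1
    ext1 y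
    by_cases hy : y ∈ D
    · rw [indicator_of_mem hy, hess_grad_cut, add_sub_cancel]
      module
    · rw [indicator_of_notMem hy, cC_far d ε hε]
      · simp
      by_contra h
      exact hy (hb (by rw [mem_ball, dist_eq_norm]; exact not_le.1 h))
  rw [e1, integral_sub i1 c1, c3, e2, (deriv_inside d hd hDm hDb x ε hε hb w).2]
  abel

lemma tendsto_lhs (d : ℕ) (hd : 2 ≤ d) {D : Set (EE d)} {f : EE d → EE d}
    (hf : IntegrableOn f D) (x : EE d) :
    Filter.Tendsto (fun ε : ℝ => ∫ y in D, (1 - cutη d ε x y) • f y)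
      (nhdsWithin 0 (Ioi 0)) (nhds (∫ y in D, f y)) := by
  have : Nonempty (Fin d) := ⟨⟨0, by omega⟩⟩
  refine tendsto_integral_filter_of_dominated_convergence (fun y => ‖f y‖) ?_ ?_ hf.norm ?_
  · refine Filter.Eventually.of_forall fun ε => ?_
    have hc := (contDiff_cutη d ε x).continuous
    exact AEStronglyMeasurable.smul
      (Continuous.aestronglyMeasurable (f := fun y => 1 - cutη d ε x y) (by fun_prop)) hf.aestronglyMeasurable
  · refine Filter.Eventually.of_forall fun ε => Filter.Eventually.of_forall fun y => ?_
    rw [norm_smul]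
    refine mul_le_of_le_one_left (norm_nonneg _) ?_
    have h0 := Real.smoothTransition.nonneg (2 - ‖y - x‖ ^ 2 / ε ^ 2)
    have h1 := Real.smoothTransition.le_one (2 - ‖y - x‖ ^ 2 / ε ^ 2)
    rw [Real.norm_eq_abs, abs_le]
    unfold cutη
    constructor <;> linarith
  · have hne : ∀ᵐ y ∂(volume.restrict D), y ≠ x := by
      refine ae_restrict_of_ae ?_
      exact Measure.ae_ne volume x
    filter_upwards [hne] with y hy
    refine tendsto_const_nhds.congr' ?_
    have hp : 0 < ‖y - x‖ := norm_pos_iff.2 (sub_ne_zero.2 hy)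
    have h4 : ∀ᶠ ε : ℝ in nhdsWithin 0 (Ioi 0), ε ∈ Ioo (0:ℝ) (‖y - x‖ / 2) :=
      Ioo_mem_nhdsGT (by positivity)
    filter_upwards [h4] with ε hε
    rw [cutη_far d ε hε.1 x y (by linarith [hε.2]), sub_zero, one_smul]

/-- Lemma (commutator identity): the commutator formula for the material derivative
of the transported gradient. -/
theorem commutator_identity
    (d : ℕ) (hd : 2 ≤ d) (γ : ℝ) (hγ : γ ∈ Set.Ioo (0:ℝ) 1)
    (D : Set (EuclideanSpace ℝ (Fin d))) (Φ : EuclideanSpace ℝ (Fin d) → ℝ)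
    (hDo : IsOpen D) (hDb : Bornology.IsBounded D) (hΦ : IsDefining d γ D Φ)
    (x : EuclideanSpace ℝ (Fin d)) (hx : x ∉ frontier D) :
    DifferentiableAt ℝ
      (fun z : EuclideanSpace ℝ (Fin d) => -(∫ y in D, gradN d (z - y))) x ∧
    IntegrableOn (fun y => hessN d (x - y) (gradient Φ x - gradient Φ y)) D volume ∧
    (∫ y in D, hessN d (x - y) (gradient Φ x - gradient Φ y))
      = -(fderiv ℝ (fun z : EuclideanSpace ℝ (Fin d) => -(∫ y in D, gradN d (z - y))) x
            (gradient Φ x))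
        - Set.indicator D (fun _ => (1:ℝ)) x • gradient Φ x := by
  obtain ⟨hC, ⟨K, hK⟩, hD, hfr, -⟩ := hΦ
  have hDm := hDo.measurableSet
  have hIntg := integrable_commutator d hd γ hγ.1 hDb (continuous_gradient d hC) K hK x
  have hd0 : (d:ℝ) ≠ 0 := by positivity
  have hneg : fderiv ℝ (fun z : EuclideanSpace ℝ (Fin d) => -(∫ y in D, gradN d (z - y))) x
      = -fderiv ℝ (fun z : EuclideanSpace ℝ (Fin d) => (∫ y in D, gradN d (z - y))) x :=
    fderiv_fun_neg
  rw [hneg, ContinuousLinearMap.neg_apply, neg_neg]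
  by_cases hxD : x ∈ D
  · obtain ⟨δ, hδ, hball⟩ := Metric.isOpen_iff.1 hDo x hxD
    have hsub : ∀ ε, ε ≤ δ / 2 → ball x (2 * ε) ⊆ D := fun ε hε =>
      (ball_subset_ball (by linarith)).trans hball
    refine ⟨(deriv_inside d hd hDm hDb x (δ / 2) (by positivity) (hsub _ le_rfl) 0).1.fun_neg,
      hIntg, ?_⟩
    rw [indicator_of_mem hxD, one_smul]
    have hl := tendsto_lhs d hd hIntg x
    have hr := ((tendsto_taylor d hd hC x).const_smul ((d:ℝ) - 1)).const_sub
      (fderiv ℝ (fun z => ∫ y in D, gradN d (z - y)) x (gradient Φ x)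
        - (1 / (d:ℝ)) • gradient Φ x)
    have h4 : ∀ᶠ ε : ℝ in nhdsWithin 0 (Ioi 0), ε ∈ Ioo (0:ℝ) (δ / 2) :=
      Ioo_mem_nhdsGT (by positivity)
    have hu := tendsto_nhds_unique (hl.congr' (by
      filter_upwards [h4] with ε hε
      exact inside_eps d hd hDm hDb hC hD x ε hε.1 (hsub ε hε.2.le))) hr
    rw [hu, sub_sub, smul_smul, ← add_smul]
    have : 1 / (d:ℝ) + ((d:ℝ) - 1) * (1 / d) = 1 := by field_simp; ring
    rw [this, one_smul]
  · have hcl : x ∉ closure D := by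
      intro h
      exact hx (by rw [hDo.frontier_eq]; exact ⟨h, hxD⟩)
    obtain ⟨ρ, hρ, hball⟩ := Metric.isOpen_iff.1 isClosed_closure.isOpen_compl x hcl
    obtain ⟨o1, o2⟩ := outside_case d hd hDm hDb hC hD x ρ hρ
      (fun y hy hyD => hball hy (subset_closure hyD))
    refine ⟨o1.fun_neg, hIntg, ?_⟩
    rw [indicator_of_notMem hxD, zero_smul, sub_zero]
    exact o2
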